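/- arXiv:1811.06472 — 2 statements merged into one kernel-verified Lean document; each statement's English description precedes it below -/
import Mathlib

section
/- Let q be a probability measure on ℝ with finite first moment, let c be a real constant and s > 0. Let x be a random variable with law q and z a Gaussian random variable with mean 0 and variance s independent of x, and set y = c·x + z. Then a version of the conditional expectation E[x | y] is given by the function r(y) = (∫ t · exp(−(y − c·t)²/(2s)) dq(t)) / (∫ exp(−(y − c·t)²/(2s)) dq(t)); that is, E[x | y] = r(y) almost surely, and the denominator is strictly positive for every y ∈ ℝ. -/
open MeasureTheory ProbabilityTheory
open scoped NNReal

/-!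
Write `w (t, y)` for the density at `y` of `N(c t, s)`. Independence of `x` and `z` together with
translation of Gaussians shows that `(x, y)` has density `w` with respect to `q ⊗ volume`
(`map_prodMk_channel`). Fubini then reduces the defining property of `E[x | y]` to the pointwise
identity `∫ w (t, y) * r y dq(t) = ∫ w (t, y) * t dq(t)`, which is how the Bayes ratio `r` is
defined (`bayesRatio_integrable_and_integral_eq`). The normalising constant of the Gaussian
density cancels in the ratio.
-/

/-- Abstract Bayes formula: for a joint density `w` with positive `y`-marginal, the ratio
`(∫ w (t, y) * t dq) / (∫ w (t, y) dq)` is integrable against `w` and has the same integral as the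
first coordinate. Applying it with `ν` restricted to a set gives the set-integral identities that
characterise the conditional expectation. -/
lemma bayesRatio_integrable_and_integral_eq (q ν : Measure ℝ) [SFinite q] [SFinite ν]
    (w : ℝ × ℝ → ℝ) (hw : Measurable w) (hw0 : ∀ p, 0 ≤ w p)
    (hpos : ∀ y, 0 < ∫ t, w (t, y) ∂q)
    (hint : Integrable (fun p : ℝ × ℝ => w p * p.1) (q.prod ν)) :
    Integrable (fun p : ℝ × ℝ =>
        w p * ((∫ t, w (t, p.2) * t ∂q) / ∫ t, w (t, p.2) ∂q)) (q.prod ν) ∧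
      ∫ p, w p * ((∫ t, w (t, p.2) * t ∂q) / ∫ t, w (t, p.2) ∂q) ∂(q.prod ν)
        = ∫ p, w p * p.1 ∂(q.prod ν) := by
  have hN : StronglyMeasurable fun y => ∫ t, w (t, y) * t ∂q :=
    StronglyMeasurable.integral_prod_left' (f := fun p : ℝ × ℝ => w p * p.1)
      (hw.mul measurable_fst).stronglyMeasurable
  have hD : StronglyMeasurable fun y => ∫ t, w (t, y) ∂q :=
    StronglyMeasurable.integral_prod_left' (f := w) hw.stronglyMeasurable
  have hr : Measurable fun y => (∫ t, w (t, y) * t ∂q) / ∫ t, w (t, y) ∂q :=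
    hN.measurable.div hD.measurable
  -- A positive Bochner integral forces integrability of each slice.
  have hwint : ∀ y, Integrable (fun t => w (t, y)) q := fun y =>
    Integrable.of_integral_ne_zero (hpos y).ne'
  have hI : Integrable (fun p : ℝ × ℝ =>
      w p * ((∫ t, w (t, p.2) * t ∂q) / ∫ t, w (t, p.2) ∂q)) (q.prod ν) := by
    have hm : Measurable fun p : ℝ × ℝ =>
        w p * ((∫ t, w (t, p.2) * t ∂q) / ∫ t, w (t, p.2) ∂q) :=
      hw.mul (hr.comp measurable_snd)
    rw [integrable_prod_iff' hm.aestronglyMeasurable]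
    refine ⟨.of_forall fun y => (hwint y).mul_const
      ((∫ t, w (t, y) * t ∂q) / ∫ t, w (t, y) ∂q), ?_⟩
    refine hint.integral_prod_right.norm.congr (.of_forall fun y => ?_)
    simp only [norm_mul, norm_div, integral_mul_const, Real.norm_of_nonneg (hw0 _),
      Real.norm_of_nonneg (hpos y).le]
    have hne := (hpos y).ne'
    field_simp
  refine ⟨hI, ?_⟩
  rw [integral_prod_symm _ hI, integral_prod_symm _ hint]
  refine integral_congr_ae (.of_forall fun y => ?_)
  simp only [integral_mul_const]
  have hne := (hpos y).ne'
  field_simp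

/-- The pair (input, output) of the Gaussian channel has density `(t, y) ↦ N(c t, s)(y)` with
respect to the product of the input law and Lebesgue measure. -/
lemma map_prodMk_channel {Ω : Type*} [MeasureSpace Ω] [IsProbabilityMeasure (ℙ : Measure Ω)]
    (q : Measure ℝ) [IsProbabilityMeasure q]
    (c : ℝ) (s : ℝ≥0) (hs : 0 < s)
    (x : Ω → ℝ) (hx : Measurable x) (hxlaw : Measure.map x ℙ = q)
    (z : Ω → ℝ) (hz : Measurable z) (hzlaw : Measure.map z ℙ = gaussianReal 0 s)
    (hindep : IndepFun x z ℙ) :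
    Measure.map (fun ω => (x ω, c * x ω + z ω)) ℙ
      = (q.prod volume).withDensity (fun p => gaussianPDF (c * p.1) s p.2) := by
  have hxz : Measure.map (fun ω => (x ω, z ω)) ℙ = q.prod (gaussianReal 0 s) := by
    rw [(indepFun_iff_map_prod_eq_prod_map_map hx.aemeasurable hz.aemeasurable).1 hindep,
      hxlaw, hzlaw]
  have hg : Measurable fun p : ℝ × ℝ => (p.1, c * p.1 + p.2) := by fun_prop
  have hmap : Measure.map (fun ω => (x ω, c * x ω + z ω)) ℙ
      = Measure.map (fun p : ℝ × ℝ => (p.1, c * p.1 + p.2)) (q.prod (gaussianReal 0 s)) := by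
    rw [← hxz, Measure.map_map hg (hx.prodMk hz)]
    rfl
  have hpdf : Measurable fun p : ℝ × ℝ => gaussianPDF (c * p.1) s p.2 :=
    measurable_uncurry_gaussianPDF.comp (f := fun p : ℝ × ℝ => (c * p.1, s, p.2)) (by fun_prop)
  ext S hS
  rw [hmap, Measure.map_apply hg hS, Measure.prod_apply (hg hS), withDensity_apply _ hS,
    ← lintegral_indicator hS, lintegral_prod _ (hpdf.indicator hS).aemeasurable]
  refine lintegral_congr fun t => ?_
  have hSt : MeasurableSet (Prod.mk t ⁻¹' S) := measurable_prodMk_left hS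
  have h1 := gaussianReal_map_const_add (μ := 0) (v := s) (c * t)
  rw [zero_add] at h1
  have h2 : gaussianReal (c * t) s (Prod.mk t ⁻¹' S)
      = gaussianReal 0 s ((c * t + ·) ⁻¹' (Prod.mk t ⁻¹' S)) := by
    rw [← h1, Measure.map_apply (by fun_prop) hSt]
  rw [gaussianReal_apply _ hs.ne', ← lintegral_indicator hSt] at h2
  exact h2.symm

/-- Bayes-ratio form of the posterior-mean estimator for the scalar Gaussian channel
`y = c·x + z`: if `x ~ q` with finite first moment and `z ~ N(0, s)` is independent of
`x`, then `E[x | y] = r (y)` a.s., where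
`r (y) = (∫ t · exp (−(y − c t)² / (2 s)) dq) / (∫ exp (−(y − c t)² / (2 s)) dq)`,
and the denominator is strictly positive for every `y`. -/
theorem posterior_mean_bayes_ratio
    {Ω : Type*} [MeasureSpace Ω] [IsProbabilityMeasure (ℙ : Measure Ω)]
    (q : Measure ℝ) [IsProbabilityMeasure q] (hq1 : Integrable (fun t => t) q)
    (c : ℝ) (s : ℝ≥0) (hs : 0 < s)
    (x : Ω → ℝ) (hx : Measurable x) (hxlaw : Measure.map x ℙ = q)
    (z : Ω → ℝ) (hz : Measurable z) (hzlaw : Measure.map z ℙ = gaussianReal 0 s)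
    (hindep : IndepFun x z ℙ) :
    (∀ y : ℝ, 0 < ∫ t, Real.exp (-(y - c * t) ^ 2 / (2 * (s : ℝ))) ∂q)
    ∧ ℙ[x | MeasurableSpace.comap (fun ω => c * x ω + z ω) inferInstance]
        =ᵐ[ℙ]
      fun ω =>
        (∫ t, t * Real.exp (-((c * x ω + z ω) - c * t) ^ 2 / (2 * (s : ℝ))) ∂q) /
        (∫ t, Real.exp (-((c * x ω + z ω) - c * t) ^ 2 / (2 * (s : ℝ))) ∂q) := by
  have hs' : s ≠ 0 := hs.ne'
  have hsR : (0 : ℝ) < s := hs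
  have hexp : ∀ y : ℝ, Integrable (fun t => Real.exp (-(y - c * t) ^ 2 / (2 * (s : ℝ)))) q := by
    intro y
    refine Integrable.of_bound (C := 1) (by fun_prop) (.of_forall fun t => ?_)
    rw [Real.norm_of_nonneg (Real.exp_pos _).le, Real.exp_le_one_iff]
    exact div_nonpos_of_nonpos_of_nonneg (neg_nonpos.2 (sq_nonneg _)) (by positivity)
  have hden : ∀ y : ℝ, 0 < ∫ t, Real.exp (-(y - c * t) ^ 2 / (2 * (s : ℝ))) ∂q :=
    fun y => integral_exp_pos (hexp y)
  refine ⟨hden, ?_⟩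
  set w : ℝ × ℝ → ℝ := fun p => gaussianPDFReal (c * p.1) s p.2 with hwdef
  have hw : Measurable w :=
    measurable_uncurry_gaussianPDFReal.comp (f := fun p : ℝ × ℝ => (c * p.1, s, p.2))
      (by fun_prop)
  have hw0 : ∀ p, 0 ≤ w p := fun p => gaussianPDFReal_nonneg _ _ _
  have hκ : 0 < (√(2 * Real.pi * s))⁻¹ := by positivity
  have hwD : ∀ y, ∫ t, w (t, y) ∂q
      = (√(2 * Real.pi * s))⁻¹ * ∫ t, Real.exp (-(y - c * t) ^ 2 / (2 * (s : ℝ))) ∂q := by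
    intro y
    rw [← integral_const_mul]
    rfl
  have hwN : ∀ y, ∫ t, w (t, y) * t ∂q
      = (√(2 * Real.pi * s))⁻¹ * ∫ t, t * Real.exp (-(y - c * t) ^ 2 / (2 * (s : ℝ))) ∂q := by
    intro y
    rw [← integral_const_mul]
    refine integral_congr_ae (.of_forall fun t => ?_)
    simp only [hwdef, gaussianPDFReal]
    ring
  have hpos : ∀ y, 0 < ∫ t, w (t, y) ∂q := fun y => by
    rw [hwD]; exact mul_pos hκ (hden y)
  set r : ℝ → ℝ := fun y => (∫ t, w (t, y) * t ∂q) / ∫ t, w (t, y) ∂q with hrdef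
  have hr_eq : ∀ y, r y = (∫ t, t * Real.exp (-(y - c * t) ^ 2 / (2 * (s : ℝ))) ∂q) /
      ∫ t, Real.exp (-(y - c * t) ^ 2 / (2 * (s : ℝ))) ∂q := by
    intro y
    simp only [hrdef, hwD, hwN]
    exact mul_div_mul_left _ _ hκ.ne'
  have hr : Measurable r :=
    (StronglyMeasurable.integral_prod_left' (f := fun p : ℝ × ℝ => w p * p.1)
      (hw.mul measurable_fst).stronglyMeasurable).measurable.div
    (StronglyMeasurable.integral_prod_left' (f := w) hw.stronglyMeasurable).measurable
  set Y : Ω → ℝ := fun ω => c * x ω + z ω with hYdef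
  have hY : Measurable Y := by fun_prop
  have hxY : Measurable fun ω => (x ω, Y ω) := hx.prodMk hY
  have hlaw := map_prodMk_channel q c s hs x hx hxlaw z hz hzlaw hindep
  have hpdf : Measurable fun p : ℝ × ℝ => gaussianPDF (c * p.1) s p.2 :=
    measurable_uncurry_gaussianPDF.comp (f := fun p : ℝ × ℝ => (c * p.1, s, p.2)) (by fun_prop)
  have hxint : Integrable x ℙ := by
    rw [← hxlaw] at hq1
    exact hq1.comp_measurable hx
  -- Transfer of integrability and of set integrals from `Ω` to the product space.
  have hint_iff : ∀ F : ℝ × ℝ → ℝ, Measurable F →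
      (Integrable (fun ω => F (x ω, Y ω)) ℙ ↔
        Integrable (fun p => w p * F p) (q.prod volume)) := by
    intro F hF
    have h1 := integrable_map_measure (μ := (ℙ : Measure Ω)) (f := fun ω => (x ω, Y ω))
      (g := F) hF.aestronglyMeasurable hxY.aemeasurable
    rw [hlaw, integrable_withDensity_iff_integrable_smul' hpdf
      (.of_forall fun _ => gaussianPDF_lt_top)] at h1
    simp only [toReal_gaussianPDF, smul_eq_mul] at h1
    exact h1.symm
  have hset : ∀ F : ℝ × ℝ → ℝ, Measurable F → ∀ B : Set ℝ, MeasurableSet B →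
      ∫ ω in Y ⁻¹' B, F (x ω, Y ω) = ∫ p, w p * F p ∂(q.prod (volume.restrict B)) := by
    intro F hF B hB
    have hBm : MeasurableSet ((Set.univ : Set ℝ) ×ˢ B) := MeasurableSet.univ.prod hB
    have h1 := setIntegral_map (μ := (ℙ : Measure Ω)) (g := fun ω => (x ω, Y ω)) (f := F)
      hBm hF.aestronglyMeasurable hxY.aemeasurable
    rw [hlaw, restrict_withDensity hBm, ← Measure.prod_restrict, Measure.restrict_univ,
      integral_withDensity_eq_integral_toReal_smul hpdf
        (.of_forall fun _ => gaussianPDF_lt_top)] at h1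
    simp only [toReal_gaussianPDF, smul_eq_mul] at h1
    have h2 : (fun ω => (x ω, Y ω)) ⁻¹' ((Set.univ : Set ℝ) ×ˢ B) = Y ⁻¹' B := by
      ext; simp
    rw [h2] at h1
    exact h1.symm
  have hwint : Integrable (fun p : ℝ × ℝ => w p * p.1) (q.prod volume) :=
    (hint_iff Prod.fst measurable_fst).1 hxint
  have hrint : Integrable (fun ω => r (Y ω)) ℙ :=
    (hint_iff (fun p => r p.2) (hr.comp measurable_snd)).2
      (bayesRatio_integrable_and_integral_eq q volume w hw hw0 hpos hwint).1
  have hmain : (fun ω => r (Y ω)) =ᵐ[ℙ] ℙ[x | MeasurableSpace.comap Y inferInstance] := by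
    refine ae_eq_condExp_of_forall_setIntegral_eq hY.comap_le hxint
      (fun _ _ _ => hrint.integrableOn) ?_
      (hr.comp (comap_measurable Y)).stronglyMeasurable.aestronglyMeasurable
    rintro _ ⟨B, hB, rfl⟩ -
    have hwintB : Integrable (fun p : ℝ × ℝ => w p * p.1) (q.prod (volume.restrict B)) := by
      have h := hwint.restrict (s := (Set.univ : Set ℝ) ×ˢ B)
      rwa [← Measure.prod_restrict, Measure.restrict_univ] at h
    rw [hset (fun p => r p.2) (hr.comp measurable_snd) B hB,
      hset Prod.fst measurable_fst B hB]
    exact (bayesRatio_integrable_and_integral_eq q _ w hw hw0 hpos hwintB).2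
  refine hmain.symm.trans (.of_forall fun ω => ?_)
  exact hr_eq (Y ω)
end

section
/- Let q be a probability measure on ℝ with finite second moment, let c be a real constant and s > 0. Define for y ∈ ℝ the normalization Z(y) = ∫ exp(−(y − c·t)²/(2s)) dq(t), the posterior mean r(y) = (∫ t · exp(−(y − c·t)²/(2s)) dq(t)) / Z(y), and the posterior second moment m₂(y) = (∫ t² · exp(−(y − c·t)²/(2s)) dq(t)) / Z(y). Then r is differentiable on ℝ and for every y ∈ ℝ, r′(y) = (c/s) · (m₂(y) − r(y)²); i.e., the derivative of the posterior mean with respect to the observation equals (c/s) times the posterior variance. -/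
open MeasureTheory

/-!
Write `E y t = exp (-(y - c t)² / (2 s))`, so that `∂E/∂y = (c t - y) / s * E`. Since `0 < E ≤ 1`, a
weight `g` for which `g` and `t g` grow at most quadratically can be differentiated under the
integral sign: `(∫ g E)′ = (c / s) ∫ t g E - (y / s) ∫ g E` (`hasDerivAt_weighted_integral`).
With `g = t` and `g = 1` this gives the derivatives of the numerator and of the denominator of the
posterior mean. In the quotient rule the two `y / s` terms cancel, which leaves `c / s` times
the posterior variance.
-/

lemma gaussian_kernel_le_one {s : ℝ} (hs : 0 < s) (c y t : ℝ) :
    Real.exp (-(y - c * t) ^ 2 / (2 * s)) ≤ 1 := by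
  rw [Real.exp_le_one_iff]
  exact div_nonpos_of_nonpos_of_nonneg (neg_nonpos.2 (sq_nonneg _)) (by positivity)

lemma integrable_mul_gaussian_kernel (q : Measure ℝ) [IsProbabilityMeasure q]
    (hq2 : Integrable (fun t => t ^ 2) q) (c : ℝ) {s : ℝ} (hs : 0 < s) {g : ℝ → ℝ}
    (hg : Continuous g) (h0 : ∀ t, |g t| ≤ 1 + t ^ 2) (y : ℝ) :
    Integrable (fun t => g t * Real.exp (-(y - c * t) ^ 2 / (2 * s))) q := by
  refine Integrable.mono' (g := fun t => 1 + t ^ 2) ((integrable_const 1).add hq2)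
    (by fun_prop) (Filter.Eventually.of_forall fun t => ?_)
  rw [Real.norm_eq_abs, abs_mul, Real.abs_exp]
  calc |g t| * Real.exp (-(y - c * t) ^ 2 / (2 * s)) ≤ |g t| * 1 := by
        gcongr
        exact gaussian_kernel_le_one hs c y t
    _ ≤ 1 + t ^ 2 := by simpa using h0 t

/-- Differentiation under the integral sign. On the unit ball around `y` the `y`-derivative of the
integrand is dominated by a constant multiple of `1 + t²`, which is integrable by the second moment
assumption. -/
lemma hasDerivAt_weighted_integral (q : Measure ℝ) [IsProbabilityMeasure q]
    (hq2 : Integrable (fun t => t ^ 2) q) (c : ℝ) {s : ℝ} (hs : 0 < s) {g : ℝ → ℝ}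
    (hg : Continuous g) (h0 : ∀ t, |g t| ≤ 1 + t ^ 2) (h1 : ∀ t, |t * g t| ≤ 1 + t ^ 2) (y : ℝ) :
    HasDerivAt (fun y : ℝ => ∫ t, g t * Real.exp (-(y - c * t) ^ 2 / (2 * s)) ∂q)
      ((c / s) * (∫ t, t * g t * Real.exp (-(y - c * t) ^ 2 / (2 * s)) ∂q) -
        (y / s) * ∫ t, g t * Real.exp (-(y - c * t) ^ 2 / (2 * s)) ∂q) y := by
  have hg1 : Continuous fun t => t * g t := continuous_id.mul hg
  have key := (hasDerivAt_integral_of_dominated_loc_of_deriv_le (μ := q) (x₀ := y)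
    (s := Metric.ball y 1)
    (F := fun y t => g t * Real.exp (-(y - c * t) ^ 2 / (2 * s)))
    (F' := fun y t => (c / s) * (t * g t * Real.exp (-(y - c * t) ^ 2 / (2 * s))) -
      (y / s) * (g t * Real.exp (-(y - c * t) ^ 2 / (2 * s))))
    (bound := fun t => (|c| / s + (|y| + 1) / s) * (1 + t ^ 2))
    (Metric.ball_mem_nhds y one_pos)
    (Filter.Eventually.of_forall fun x =>
      (integrable_mul_gaussian_kernel q hq2 c hs hg h0 x).aestronglyMeasurable)
    (integrable_mul_gaussian_kernel q hq2 c hs hg h0 y)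
    (by fun_prop) ?_ (((integrable_const 1).add hq2).const_mul _) ?_).2
  · rwa [integral_sub ((integrable_mul_gaussian_kernel q hq2 c hs hg1 h1 y).const_mul _)
      ((integrable_mul_gaussian_kernel q hq2 c hs hg h0 y).const_mul _),
      integral_const_mul, integral_const_mul] at key
  · refine Filter.Eventually.of_forall fun t x hx => ?_
    have hx' : |x| ≤ |y| + 1 := by
      rw [Metric.mem_ball, Real.dist_eq] at hx
      linarith [abs_sub_abs_le_abs_sub x y]
    have hE := gaussian_kernel_le_one hs c x t
    have hE0 := Real.exp_nonneg (-(x - c * t) ^ 2 / (2 * s))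
    rw [Real.norm_eq_abs]
    refine (abs_sub _ _).trans ?_
    simp only [abs_mul (c / s), abs_mul (x / s), abs_mul _ (Real.exp _), Real.abs_exp, abs_div,
      abs_of_pos hs]
    rw [add_mul]
    gcongr
    · exact (mul_le_of_le_one_right (abs_nonneg _) hE).trans (h1 t)
    · exact (mul_le_of_le_one_right (abs_nonneg _) hE).trans (h0 t)
  · refine Filter.Eventually.of_forall fun t x _ => ?_
    have h : HasDerivAt (fun x : ℝ => -(x - c * t) ^ 2 / (2 * s)) ((c * t - x) / s) x := by
      refine ((((hasDerivAt_id' x).sub_const (c * t)).pow 2).neg.div_const (2 * s)).congr_deriv ?_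
      simp
      field_simp
      ring
    refine (h.exp.const_mul (g t)).congr_deriv ?_
    field_simp

/-- Derivative of the posterior mean: for a prior `q` with finite second moment,
`Z (y) = ∫ exp (−(y − c t)² / (2 s)) dq`, posterior mean
`r (y) = (∫ t · exp (−(y − c t)² / (2 s)) dq) / Z (y)` and posterior second moment
`m₂ (y) = (∫ t² · exp (−(y − c t)² / (2 s)) dq) / Z (y)`, the function `r` is
differentiable with `r′ (y) = (c / s) · (m₂ (y) − r (y)²)` at every `y`. -/
theorem posterior_mean_deriv
    (q : Measure ℝ) [IsProbabilityMeasure q] (hq2 : Integrable (fun t => t ^ 2) q)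
    (c s : ℝ) (hs : 0 < s) :
    ∀ y : ℝ,
      HasDerivAt
        (fun y : ℝ =>
          (∫ t, t * Real.exp (-(y - c * t) ^ 2 / (2 * s)) ∂q) /
          (∫ t, Real.exp (-(y - c * t) ^ 2 / (2 * s)) ∂q))
        ((c / s) *
          ((∫ t, t ^ 2 * Real.exp (-(y - c * t) ^ 2 / (2 * s)) ∂q) /
              (∫ t, Real.exp (-(y - c * t) ^ 2 / (2 * s)) ∂q) -
            ((∫ t, t * Real.exp (-(y - c * t) ^ 2 / (2 * s)) ∂q) /
              (∫ t, Real.exp (-(y - c * t) ^ 2 / (2 * s)) ∂q)) ^ 2))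
        y := by
  intro y
  have hN := hasDerivAt_weighted_integral q hq2 c hs (g := fun t => t) continuous_id
    (fun t => by rw [abs_le]; constructor <;> nlinarith [sq_nonneg (t + 1), sq_nonneg (t - 1)])
    (fun t => by rw [abs_le]; constructor <;> nlinarith [sq_nonneg t]) y
  have hZ := hasDerivAt_weighted_integral q hq2 c hs (g := fun _ => 1) continuous_const
    (fun t => by rw [abs_one]; nlinarith [sq_nonneg t])
    (fun t => by rw [abs_le]; constructor <;> nlinarith [sq_nonneg (t + 1), sq_nonneg (t - 1)]) y
  have hint := integrable_mul_gaussian_kernel q hq2 c hs (g := fun _ => 1) continuous_const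
    (fun t => by rw [abs_one]; nlinarith [sq_nonneg t]) y
  simp only [one_mul, mul_one] at hZ hint
  simp only [← pow_two] at hN
  have hpos : (∫ t, Real.exp (-(y - c * t) ^ 2 / (2 * s)) ∂q) ≠ 0 :=
    (integral_exp_pos hint).ne'
  refine (hN.div hZ hpos).congr_deriv ?_
  field_simp
  ring
end
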